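/- arXiv:1409.5878 — 2 statements merged into one kernel-verified Lean document; each statement's English description precedes it below -/
import Mathlib

section
/- Let k be a field of characteristic zero, M = ℤ^n, p : M → ℤ a nonzero primitive linear form, e ∈ M, and ∂_{p,e} the derivation of k[M] given by χ^m ↦ p(m)χ^{m+e}. Then the induced derivation on the fraction field Frac(k[M]) is rationally integrable if and only if p(e) = 1 or p(e) = -1. -/
namespace ToricAux

open Polynomial

/-- The formal exponential of a derivation. -/
noncomputable def E {k K : Type*} [Field k] [Field K] [Algebra k K] (D : Derivation k K K)
    (f : K) : PowerSeries K :=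
  PowerSeries.mk fun j => ((j.factorial : K)⁻¹) * ((⇑D)^[j] f)

/-- A power series is a quotient of polynomials. -/
def Rat {K : Type*} [Field K] (F : PowerSeries K) : Prop :=
  ∃ P Q : Polynomial K, Q ≠ 0 ∧ (Q : PowerSeries K) * F = P

section
variable {k K : Type*} [Field k] [Field K] [Algebra k K] (D : Derivation k K K)

lemma coeff_zero_E (f : K) : PowerSeries.coeff 0 (E D f) = f := by
  simp [E]

lemma iter_add (j : ℕ) (f g : K) : (⇑D)^[j] (f + g) = (⇑D)^[j] f + (⇑D)^[j] g := by
  induction j generalizing f g with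
  | zero => rfl
  | succ j ih => simp only [Function.iterate_succ_apply, map_add, ih]

lemma iter_smul (j : ℕ) (c : k) (f : K) : (⇑D)^[j] (c • f) = c • (⇑D)^[j] f := by
  induction j generalizing f with
  | zero => rfl
  | succ j ih => simp only [Function.iterate_succ_apply, Derivation.map_smul, ih]

lemma iter_zero (j : ℕ) : (⇑D)^[j] 0 = 0 := by
  induction j with
  | zero => rfl
  | succ j ih => simp only [Function.iterate_succ_apply, map_zero, ih]

lemma E_add (f g : K) : E D (f + g) = E D f + E D g := by
  ext j
  simp [E, iter_add, mul_add]

lemma E_smul (c : k) (f : K) : E D (c • f) = PowerSeries.C (algebraMap k K c) * E D f := by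
  ext j
  simp only [E, iter_smul, PowerSeries.coeff_C_mul, PowerSeries.coeff_mk]
  rw [Algebra.smul_def]
  ring

variable [CharZero K]

lemma deriv_E (f : K) : PowerSeries.derivative K (E D f) = E D (D f) := by
  ext j
  rw [PowerSeries.coeff_derivative]
  simp only [E, PowerSeries.coeff_mk, Function.iterate_succ_apply, Nat.factorial_succ]
  have h1 : (j.factorial : K) ≠ 0 := by exact_mod_cast j.factorial_ne_zero
  have h2 : (j : K) + 1 ≠ 0 := by exact_mod_cast j.succ_ne_zero
  push_cast
  field_simp

lemma E_mul (f g : K) : E D (f * g) = E D f * E D g := by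
  ext j
  induction j generalizing f g with
  | zero =>
    have := coeff_zero_E D
    simp only [PowerSeries.coeff_zero_eq_constantCoeff] at this
    simp [this]
  | succ j ih =>
    have h2 : (j : K) + 1 ≠ 0 := by exact_mod_cast j.succ_ne_zero
    apply mul_right_cancel₀ h2
    rw [← PowerSeries.coeff_derivative, ← PowerSeries.coeff_derivative, deriv_E,
      Derivation.leibniz, Derivation.leibniz, deriv_E, deriv_E]
    simp only [smul_eq_mul, E_add, map_add, ih]

lemma E_const (f : K) (h : D f = 0) : E D f = PowerSeries.C f := by
  ext j
  cases j with
  | zero => simpa using coeff_zero_E D f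
  | succ j => simp [E, h, iter_zero, PowerSeries.coeff_C]

lemma E_ne_zero (f : K) (h : f ≠ 0) : E D f ≠ 0 := by
  intro h0
  have := coeff_zero_E D f
  rw [h0] at this
  exact h (by simpa using this.symm)

lemma E_lin (w : K) (a : ℤ) (h : D w = -(a : K)) :
    E D w = ((C w - C (a : K) * X : K[X]) : PowerSeries K) := by
  have h0 : D (-(a : K)) = 0 := by simp
  apply PowerSeries.derivative.ext
  · rw [deriv_E, h, E_const D _ h0, PowerSeries.derivative_coe, derivative_sub, derivative_C, derivative_C_mul, derivative_X,
      mul_one, zero_sub, Polynomial.coe_neg, Polynomial.coe_C, map_neg]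
  · have := coeff_zero_E D w
    simp only [PowerSeries.coeff_zero_eq_constantCoeff] at this
    rw [this]
    simp

/-- The differential equation satisfied by the exponential of a monomial. -/
lemma ode (w f : K) (a s : ℤ) (h : D w = -(a : K)) (hf : w * D f = s * f) :
    ((C w - C (a : K) * X : K[X]) : PowerSeries K) * PowerSeries.derivative K (E D f)
      = PowerSeries.C (s : K) * E D f := by
  rw [← E_lin D w a h, deriv_E, ← E_mul, hf, E_mul, E_const D (s : K) (by simp)]

end

section
variable {K : Type*} [Field K]

lemma Rat.add {F G : PowerSeries K} (hF : Rat F) (hG : Rat G) : Rat (F + G) := by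
  obtain ⟨P, Q, hQ, h⟩ := hF
  obtain ⟨P', Q', hQ', h'⟩ := hG
  refine ⟨Q' * P + Q * P', Q * Q', mul_ne_zero hQ hQ', ?_⟩
  push_cast
  rw [← h, ← h']
  ring

lemma Rat.C_mul {F : PowerSeries K} (c : K) (hF : Rat F) : Rat (PowerSeries.C c * F) := by
  obtain ⟨P, Q, hQ, h⟩ := hF
  refine ⟨C c * P, Q, hQ, ?_⟩
  push_cast
  rw [← h]
  ring

lemma Rat.div {F G : PowerSeries K} (hF : Rat F) (hF0 : F ≠ 0) (hG : Rat (F * G)) : Rat G := by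
  obtain ⟨P, Q, hQ, h⟩ := hF
  obtain ⟨P', Q', hQ', h'⟩ := hG
  have hP : P ≠ 0 := by
    rintro rfl
    simp only [Polynomial.coe_zero, mul_eq_zero, Polynomial.coe_eq_zero_iff] at h
    tauto
  refine ⟨Q * P', P * Q', mul_ne_zero hP hQ', ?_⟩
  push_cast
  rw [← h, ← h']
  ring

lemma Rat.C (c : K) : Rat (PowerSeries.C c) :=
  ⟨Polynomial.C c, 1, one_ne_zero, by simp⟩

variable [CharZero K]

lemma rat_of_ode {w : K} (hw : w ≠ 0) (a s : ℤ) (r : ℕ) (hr : (r : ℤ) * a = s)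
    (F : PowerSeries K)
    (h : ((Polynomial.C w - Polynomial.C (a : K) * X : K[X]) : PowerSeries K)
      * PowerSeries.derivative K F = PowerSeries.C (s : K) * F) : Rat F := by
  set L : K[X] := Polynomial.C w - Polynomial.C (a : K) * X with hL
  have hL0 : L ≠ 0 := by
    intro h0
    have : L.coeff 0 = 0 := by rw [h0]; simp
    simp [hL] at this
    exact hw this
  have hLp : (L : PowerSeries K) ≠ 0 := by rwa [Ne, Polynomial.coe_eq_zero_iff]
  have hdL : PowerSeries.derivative K (L : PowerSeries K) = - PowerSeries.C (a : K) := by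
    rw [PowerSeries.derivative_coe, hL, derivative_sub, derivative_C, derivative_C_mul, derivative_X,
      mul_one, zero_sub, Polynomial.coe_neg, Polynomial.coe_C]
  have hd : PowerSeries.derivative K ((L : PowerSeries K) ^ r * F) = 0 := by
    apply (mul_eq_zero.1 (?_ : (L : PowerSeries K) * _ = 0)).resolve_left hLp
    have hs : PowerSeries.C (s : K) = (r : PowerSeries K) * PowerSeries.C (a : K) := by
      rw [← hr]; simp
    rw [Derivation.leibniz, PowerSeries.derivative_pow, hdL]
    simp only [smul_eq_mul]
    rw [hs] at h
    cases r with
    | zero => simp at h ⊢; exact h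
    | succ r =>
      simp only [Nat.add_sub_cancel]
      linear_combination (L : PowerSeries K) ^ (r + 1) * h
  have hc : (L : PowerSeries K) ^ r * F
      = PowerSeries.C (PowerSeries.constantCoeff ((L : PowerSeries K) ^ r * F)) := by
    apply PowerSeries.derivative.ext
    · rw [hd]; simp
    · simp
  refine ⟨Polynomial.C (PowerSeries.constantCoeff ((L : PowerSeries K) ^ r * F)), L ^ r,
    pow_ne_zero _ hL0, ?_⟩
  rw [Polynomial.coe_pow, Polynomial.coe_C]
  exact hc

lemma coeff_theta (P : K[X]) (i : ℕ) : (X * derivative P).coeff i = i * P.coeff i := by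
  cases i with
  | zero => simp
  | succ i => rw [coeff_X_mul, coeff_derivative]; push_cast; ring

lemma natDegree_theta (P : K[X]) : (X * derivative P).natDegree ≤ P.natDegree := by
  rw [natDegree_le_iff_coeff_eq_zero]
  intro N hN
  rw [coeff_theta, coeff_eq_zero_of_natDegree_lt hN, mul_zero]

lemma dvd_of_ode (w : K) (a s : ℤ) (F : PowerSeries K) (hF : F ≠ 0)
    (h : ((Polynomial.C w - Polynomial.C (a : K) * X : K[X]) : PowerSeries K)
      * PowerSeries.derivative K F = PowerSeries.C (s : K) * F) (hR : Rat F) : a ∣ s := by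
  obtain ⟨P, Q, hQ, hPQ⟩ := hR
  have hP : P ≠ 0 := by
    rintro rfl
    simp only [Polynomial.coe_zero, mul_eq_zero, Polynomial.coe_eq_zero_iff] at hPQ
    tauto
  have hd := congrArg (PowerSeries.derivative K) hPQ
  rw [Derivation.leibniz, PowerSeries.derivative_coe, PowerSeries.derivative_coe] at hd
  simp only [smul_eq_mul] at hd
  have key : (Polynomial.C w - Polynomial.C (a : K) * X) *
      ((X * derivative P) * Q - P * (X * derivative Q))
      = Polynomial.C (s : K) * X * (P * Q) := by
    rw [← Polynomial.coe_inj]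
    simp only [Polynomial.coe_mul, Polynomial.coe_sub, Polynomial.coe_C, Polynomial.coe_X] at h ⊢
    rw [← hd, ← hPQ]
    linear_combination PowerSeries.X * (Q : PowerSeries K) ^ 2 * h
  set p := P.natDegree
  set q := Q.natDegree
  have hc := congrArg (fun R : K[X] => R.coeff (1 + (p + q))) key
  have d1 : (Polynomial.C w - Polynomial.C (a : K) * X).natDegree ≤ 1 := by compute_degree
  have d2 : (Polynomial.C (s : K) * X).natDegree ≤ 1 := by compute_degree
  have d3 : ((X * derivative P) * Q).natDegree ≤ p + q :=
    natDegree_mul_le_of_le (natDegree_theta P) le_rfl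
  have d4 : (P * (X * derivative Q)).natDegree ≤ p + q :=
    natDegree_mul_le_of_le le_rfl (natDegree_theta Q)
  have d5 : (P * Q).natDegree ≤ p + q := natDegree_mul_le_of_le le_rfl le_rfl
  have e1 : (Polynomial.C w - Polynomial.C (a : K) * X).coeff 1 = -(a : K) := by
    simp [coeff_C]
  have e2 : (Polynomial.C (s : K) * X).coeff 1 = (s : K) := by simp
  rw [coeff_mul_add_eq_of_natDegree_le d1 ((natDegree_sub_le _ _).trans (max_le d3 d4)),
    coeff_mul_add_eq_of_natDegree_le d2 d5, e1, e2, coeff_sub,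
    coeff_mul_add_eq_of_natDegree_le (df := p) (dg := q) (natDegree_theta P) le_rfl,
    coeff_mul_add_eq_of_natDegree_le (df := p) (dg := q) le_rfl (natDegree_theta Q),
    coeff_mul_add_eq_of_natDegree_le (df := p) (dg := q) le_rfl le_rfl, coeff_theta, coeff_theta] at hc
  have hlP : P.coeff p ≠ 0 := by simpa [p] using hP
  have hlQ : Q.coeff q ≠ 0 := by simpa [q] using hQ
  have hz : (s : K) = a * (q - p) := by
    apply mul_right_cancel₀ (mul_ne_zero hlP hlQ)
    linear_combination -hc
  refine ⟨(q : ℤ) - p, ?_⟩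
  exact_mod_cast hz

end

end ToricAux

/-- for M = ℤⁿ, a primitive nonzero linear form p : M → ℤ and e ∈ M,
the derivation ∂_{p,e} : χ^m ↦ p(m)χ^{m+e} of the Laurent polynomial ring k[M]
(char k = 0) induces a rationally integrable derivation of K = Frac(k[M]) — i.e.
each formal exponential exp(t∂)(f) = Σ ∂ⁿ(f)/n!·tⁿ ∈ K[[t]] is a quotient of
polynomials in t — if and only if p(e) = 1 or p(e) = -1. -/
theorem toric_rationally_integrable_iff (k : Type*) [Field k] [CharZero k]
    (n : ℕ) (p : (Fin n → ℤ) →+ ℤ) (e : Fin n → ℤ)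
    (hp0 : p ≠ 0)
    (hprim : ∀ (d : ℤ) (q : (Fin n → ℤ) →+ ℤ), (∀ m, p m = d * q m) → IsUnit d)
    (K : Type*) [Field K] [Algebra (AddMonoidAlgebra k (Fin n → ℤ)) K]
    [IsFractionRing (AddMonoidAlgebra k (Fin n → ℤ)) K]
    [Algebra k K] [IsScalarTower k (AddMonoidAlgebra k (Fin n → ℤ)) K]
    (D : Derivation k K K)
    (hD : ∀ m : Fin n → ℤ,
      D (algebraMap (AddMonoidAlgebra k (Fin n → ℤ)) K
          (AddMonoidAlgebra.single m (1 : k))) =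
        algebraMap (AddMonoidAlgebra k (Fin n → ℤ)) K
          (p m • AddMonoidAlgebra.single (m + e) (1 : k))) :
    (∀ f : K, ∃ P Q : Polynomial K, Q ≠ 0 ∧
        (Q : PowerSeries K) *
          (PowerSeries.mk fun j => ((j.factorial : K)⁻¹) * ((⇑D)^[j] f)) = P)
      ↔ (p e = 1 ∨ p e = -1) := by
  classical
  have inj : Function.Injective (algebraMap (AddMonoidAlgebra k (Fin n → ℤ)) K) :=
    IsFractionRing.injective _ _
  have : CharZero K := charZero_of_injective_algebraMap (algebraMap k K).injective
  change (∀ f : K, ToricAux.Rat (ToricAux.E D f)) ↔ _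
  set x : (Fin n → ℤ) → K := fun m =>
    algebraMap (AddMonoidAlgebra k (Fin n → ℤ)) K (AddMonoidAlgebra.single m (1 : k)) with hx
  have hx0 : ∀ m, x m ≠ 0 := by
    intro m h
    have h1 : AddMonoidAlgebra.single m (1 : k) = 0 := inj (by rw [map_zero]; exact h)
    simp at h1
  have hxm : ∀ m m', x m * x m' = x (m + m') := by
    intro m m'
    simp only [hx]
    rw [← map_mul, AddMonoidAlgebra.single_mul_single, one_mul]
  have hx1 : x 0 = 1 := by
    simp only [hx]
    rw [← AddMonoidAlgebra.one_def, map_one]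
  have hDx : ∀ m, D (x m) = (p m : K) * x (m + e) := by
    intro m
    simp only [hx]
    rw [hD, map_zsmul, zsmul_eq_mul]
  have hw : D (x (-e)) = -((p e : ℤ) : K) := by
    rw [hDx, neg_add_cancel, hx1, map_neg]; push_cast; ring
  have hf : ∀ m, x (-e) * D (x m) = (p m : K) * x m := by
    intro m
    rw [hDx, mul_left_comm, hxm]
    congr 2
    abel
  have hode := fun m => ToricAux.ode D (x (-e)) (x m) (p e) (p m) hw (hf m)
  constructor
  · intro H
    have hdvd : ∀ m, p e ∣ p m := fun m =>
      ToricAux.dvd_of_ode _ _ _ _ (ToricAux.E_ne_zero D _ (hx0 m)) (hode m) (H (x m))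
    choose q hq using hdvd
    by_cases he : p e = 0
    · exact absurd (AddMonoidHom.ext fun m => by simp [hq m, he]) hp0
    · have hu := hprim (p e) (AddMonoidHom.mk' q (fun m m' => by
        apply mul_left_cancel₀ he
        rw [mul_add, ← hq, ← hq, ← hq, map_add])) hq
      exact Int.isUnit_iff.1 hu
  · intro ha
    have haa : p e * p e = 1 := by rcases ha with h | h <;> simp [h]
    have hpos : ∀ m, 0 ≤ p m * p e → ToricAux.Rat (ToricAux.E D (x m)) := by
      intro m hm
      obtain ⟨r, hr⟩ := Int.eq_ofNat_of_zero_le hm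
      refine ToricAux.rat_of_ode (hx0 (-e)) (p e) (p m) r ?_ _ (hode m)
      rw [← hr, mul_assoc, haa, mul_one]
    have hmon : ∀ m, ToricAux.Rat (ToricAux.E D (x m)) := by
      intro m
      rcases le_total 0 (p m * p e) with hm | hm
      · exact hpos m hm
      · refine ToricAux.Rat.div (hpos (-m) ?_) (ToricAux.E_ne_zero D _ (hx0 (-m))) ?_
        · rw [map_neg]; linarith
        · rw [← ToricAux.E_mul, hxm, neg_add_cancel, hx1,
            ToricAux.E_const D 1 (by simp)]
          exact ToricAux.Rat.C 1
    have hpoly : ∀ g : AddMonoidAlgebra k (Fin n → ℤ),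
        ToricAux.Rat (ToricAux.E D (algebraMap _ K g)) := by
      intro g
      induction g using AddMonoidAlgebra.induction_on with
      | of m => exact hmon m
      | add g h hg hh =>
        rw [map_add, ToricAux.E_add]
        exact hg.add hh
      | smul c g hg =>
        rw [Algebra.smul_def, map_mul, ← IsScalarTower.algebraMap_apply, ← Algebra.smul_def, ToricAux.E_smul]
        exact hg.C_mul _
    intro f
    obtain ⟨g, h, hh, rfl⟩ := IsFractionRing.div_surjective (A := AddMonoidAlgebra k (Fin n → ℤ)) f
    have hh0 : algebraMap (AddMonoidAlgebra k (Fin n → ℤ)) K h ≠ 0 :=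
      IsFractionRing.to_map_ne_zero_of_mem_nonZeroDivisors hh
    refine ToricAux.Rat.div (hpoly h) (ToricAux.E_ne_zero D _ hh0) ?_
    rw [← ToricAux.E_mul, mul_div_cancel₀ _ hh0]
    exact hpoly g
end

section
/- Let k be a field of characteristic zero and let ∂ ≠ 0 be a rationally integrable k-derivation of the field k(x,y). Then there exist x₀, y₀ ∈ k(x,y) with k(x,y) = k(x₀, y₀), ∂(x₀) = 0 and ∂(y₀) = 1. -/
namespace RR

open Polynomial

/-- coefficientwise condition: `P` is killed by `D - d/dt`. -/
def Hor {k K : Type*} [Field k] [Field K] [Algebra k K] (D : Derivation k K K) (P : K[X]) : Prop :=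
  ∀ i, D (P.coeff i) = (i + 1) * P.coeff (i + 1)

variable {k K : Type*} [Field k] [Field K] [Algebra k K] (D : Derivation k K K)

/-- `D - d/dt` on polynomials. -/
noncomputable def G (P : K[X]) : K[X] :=
  (P.sum fun n a => monomial n (D a)) - derivative P

lemma coeff_G (P : K[X]) (i : ℕ) :
    (G D P).coeff i = D (P.coeff i) - (i + 1) * P.coeff (i + 1) := by
  rw [G, coeff_sub, coeff_derivative, Polynomial.sum_def, finsetSum_coeff]
  simp only [coeff_monomial, Finset.sum_ite_eq', mem_support_iff]
  congr 1
  · by_cases h : P.coeff i = 0 <;> simp [h]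
  · ring

/-- `D - d/dt` on power series. -/
noncomputable def GS (F : PowerSeries K) : PowerSeries K :=
  (PowerSeries.mk fun i => D (PowerSeries.coeff i F)) - PowerSeries.derivative K F

lemma GS_coe (P : K[X]) : GS D (P : PowerSeries K) = (G D P : PowerSeries K) := by
  ext i
  simp [GS, PowerSeries.coeff_derivative, coeff_G, mul_comm]

lemma GS_mul (A B : PowerSeries K) : GS D (A * B) = A * GS D B + B * GS D A := by
  have h : (PowerSeries.mk fun i => D (PowerSeries.coeff i (A * B))) =
      A * (PowerSeries.mk fun i => D (PowerSeries.coeff i B)) +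
      B * (PowerSeries.mk fun i => D (PowerSeries.coeff i A)) := by
    rw [mul_comm B]
    ext i
    simp only [PowerSeries.coeff_mk, PowerSeries.coeff_mul, map_add, map_sum, D.leibniz,
      smul_eq_mul, Finset.sum_add_distrib]
    congr 1
    exact Finset.sum_congr rfl fun _ _ => mul_comm _ _
  rw [GS, h, Derivation.leibniz, GS, GS]
  simp only [smul_eq_mul]
  ring

lemma GS_exp [CharZero K] (f : K) :
    GS D (PowerSeries.mk fun j => ((j.factorial : K)⁻¹) * ((⇑D)^[j] f)) = 0 := by
  ext i
  have h1 : (i.factorial : K) ≠ 0 := by exact_mod_cast i.factorial_ne_zero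
  have h2 : (i + 1 : K) ≠ 0 := by exact_mod_cast i.succ_ne_zero
  have h3 : D ((i.factorial : K)⁻¹) = 0 := by
    rw [D.leibniz_inv, D.map_natCast, smul_zero]
  simp only [GS, map_sub, PowerSeries.coeff_mk, PowerSeries.coeff_derivative, D.leibniz, h3,
    smul_eq_mul, mul_zero, add_zero, Function.iterate_succ_apply', Nat.factorial_succ,
    Nat.cast_mul, map_zero]
  push_cast
  field_simp
  ring

lemma exists_hor (F : PowerSeries K) (hF : GS D F = 0)
    (h : ∃ P Q : K[X], Q ≠ 0 ∧ (Q : PowerSeries K) * F = P) :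
    ∃ P Q : K[X], Q.Monic ∧ Q.coeff 0 ≠ 0 ∧ (Q : PowerSeries K) * F = P ∧ Hor D P ∧ Hor D Q := by
  classical
  have hn : ∃ n : ℕ, ∃ P Q : K[X], Q ≠ 0 ∧ (Q : PowerSeries K) * F = P ∧ Q.natDegree = n := by
    obtain ⟨P, Q, h1, h2⟩ := h
    exact ⟨_, P, Q, h1, h2, rfl⟩
  obtain ⟨P₀, Q₀, hQ₀, hPQ₀, hdeg⟩ := Nat.find_spec hn
  have hmin : ∀ P Q : K[X], Q ≠ 0 → (Q : PowerSeries K) * F = P →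
      Nat.find hn ≤ Q.natDegree := fun P Q h1 h2 => Nat.find_min' hn ⟨P, Q, h1, h2, rfl⟩
  generalize Nat.find hn = n at hdeg hmin
  clear hn h
  obtain ⟨P, Q, hQ, hPQ, hdeg⟩ : ∃ P Q : K[X], Q.Monic ∧ (Q : PowerSeries K) * F = P ∧
      Q.natDegree = n := by
    refine ⟨C (Q₀.leadingCoeff)⁻¹ * P₀, C (Q₀.leadingCoeff)⁻¹ * Q₀, ?_, ?_, ?_⟩
    · rw [mul_comm]; exact monic_mul_leadingCoeff_inv hQ₀
    · rw [Polynomial.coe_mul, Polynomial.coe_mul, mul_assoc, hPQ₀]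
    · rw [natDegree_C_mul (inv_ne_zero (leadingCoeff_ne_zero.mpr hQ₀)), hdeg]
  have hG : (G D Q : PowerSeries K) * F = (G D P : K[X]) := by
    have := congrArg (GS D) hPQ
    rw [GS_mul, hF, GS_coe, GS_coe, mul_zero, zero_add, mul_comm] at this
    exact this
  have hGQ : G D Q = 0 := by
    by_contra hne
    have h1 := hmin _ _ hne hG
    have h2 : (G D Q).coeff ((G D Q).natDegree) ≠ 0 := leadingCoeff_ne_zero.mpr hne
    apply h2
    rw [coeff_G, coeff_eq_zero_of_natDegree_lt (n := _ + 1) (by omega)]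
    rcases h1.eq_or_lt with h | h
    · rw [← h, ← hdeg, hQ.coeff_natDegree]; simp
    · rw [coeff_eq_zero_of_natDegree_lt (by omega)]; simp
  have hGP : G D P = 0 := by
    rw [hGQ] at hG
    simpa using hG.symm
  refine ⟨P, Q, hQ, ?_, hPQ, fun i => ?_, fun i => ?_⟩
  · intro h0
    obtain ⟨Q', rfl⟩ := X_dvd_iff.mpr h0
    have hP0 : P.coeff 0 = 0 := by
      have := congrArg (PowerSeries.coeff 0) hPQ
      simpa using this.symm
    obtain ⟨P', rfl⟩ := X_dvd_iff.mpr hP0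
    have hQ' : Q' ≠ 0 := by rintro rfl; simp at hQ
    have := hmin P' Q' hQ' (by
      rw [Polynomial.coe_mul, Polynomial.coe_mul, Polynomial.coe_X, mul_assoc] at hPQ
      exact mul_left_cancel₀ PowerSeries.X_ne_zero hPQ)
    rw [natDegree_X_mul hQ'] at hdeg
    omega
  · have := coeff_G D P i
    rw [hGP, coeff_zero] at this
    exact (sub_eq_zero.mp this.symm)
  · have := coeff_G D Q i
    rw [hGQ, coeff_zero] at this
    exact (sub_eq_zero.mp this.symm)

lemma exists_slice_of_hor [CharZero K] (P : K[X]) (hP : Hor D P) (hd : P.natDegree ≠ 0) :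
    ∃ s, D s = 1 := by
  obtain ⟨n, hn⟩ := Nat.exists_eq_succ_of_ne_zero hd
  have hl : P.coeff (n + 1) ≠ 0 := by
    have : P ≠ 0 := by rintro rfl; simp at hd
    rw [← Nat.succ_eq_add_one, ← hn]
    exact leadingCoeff_ne_zero.mpr this
  have h1 := hP (n + 1)
  rw [coeff_eq_zero_of_natDegree_lt (n := n + 1 + 1) (by omega), mul_zero] at h1
  have h2 := hP n
  have h3 : (n + 1 : K) ≠ 0 := by exact_mod_cast n.succ_ne_zero
  have h4 : D (n + 1 : K) = 0 := by simp
  refine ⟨P.coeff n * ((n + 1 : K) * P.coeff (n + 1))⁻¹, ?_⟩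
  rw [D.leibniz, D.leibniz_inv, D.leibniz, h1, h2, h4]
  simp only [smul_eq_mul, mul_zero, add_zero, zero_add]
  field_simp

lemma exists_slice [CharZero K] (hD0 : D ≠ 0)
    (H : ∀ f : K, ∃ P Q : Polynomial K, Q ≠ 0 ∧ (Q : PowerSeries K) *
        (PowerSeries.mk fun j => ((j.factorial : K)⁻¹) * ((⇑D)^[j] f)) = P) :
    ∃ s, D s = 1 := by
  obtain ⟨f, hf⟩ : ∃ f, D f ≠ 0 := by
    by_contra! h
    exact hD0 (Derivation.ext h)
  obtain ⟨P, Q, hQ, -, hPQ, h1, h2⟩ := exists_hor D _ (GS_exp D f) (H f)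
  by_cases hd : Q.natDegree = 0
  · apply exists_slice_of_hor D P h1
    intro hd'
    have := hQ.natDegree_eq_zero.mp hd
    rw [this, Polynomial.coe_one, one_mul] at hPQ
    have := congrArg (PowerSeries.coeff 1) hPQ
    rw [Polynomial.coeff_coe, coeff_eq_zero_of_natDegree_lt (by omega)] at this
    simp [hf] at this
  · exact exists_slice_of_hor D Q h2 hd

/-- field of constants -/
def ker : IntermediateField k K where
  carrier := {a | D a = 0}
  mul_mem' := by intro a b ha hb; simp_all
  add_mem' := by intro a b ha hb; simp_all
  algebraMap_mem' := by intro r; simp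
  inv_mem' := by intro a ha; simp_all [D.leibniz_inv]

lemma mem_ker (a : K) : a ∈ ker D ↔ D a = 0 := Iff.rfl

lemma hor_mem (s : K) (hs : D s = 1) (M : IntermediateField k K) (hM : ker D ≤ M) (hsM : s ∈ M)
    (n : ℕ) : ∀ (P : K[X]), P.natDegree < n → Hor D P → P.coeff 0 ∈ M := by
  induction n with
  | zero => intro P h; omega
  | succ n ih =>
    intro P hd hP
    have ha : D (P.coeff n) = 0 := by
      rw [hP, coeff_eq_zero_of_natDegree_lt (by omega), mul_zero]
    have hR : Hor D (P - C (P.coeff n) * (X + C s) ^ n) := by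
      intro i
      simp only [coeff_sub, coeff_C_mul, coeff_X_add_C_pow, map_sub, D.leibniz, ha, hP i,
        D.leibniz_pow, hs, smul_eq_mul, D.map_natCast, mul_zero, add_zero, zero_add, mul_one,
        nsmul_eq_mul, mul_sub, Nat.sub_sub]
      congr 1
      have h := Nat.choose_succ_right_eq n i
      have h' : ((n.choose (i + 1) : ℕ) : K) * (i + 1) = n.choose i * ((n - i : ℕ) : K) := by
        have := congrArg (Nat.cast : ℕ → K) h
        push_cast at this
        exact this
      linear_combination -(P.coeff n * s ^ (n - (i + 1))) * h'
    have hsum : P.coeff 0 = (P - C (P.coeff n) * (X + C s) ^ n).coeff 0 + P.coeff n * s ^ n := by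
      simp [coeff_zero_eq_eval_zero]
    rw [hsum]
    refine add_mem ?_ (mul_mem (hM ha) (pow_mem hsM _))
    by_cases h0 : n = 0
    · subst h0
      have : (P - C (P.coeff 0) * (X + C s) ^ 0).coeff 0 = 0 := by simp
      rw [this]; exact zero_mem _
    refine ih _ ?_ hR
    have hle : (P - C (P.coeff n) * (X + C s) ^ n).natDegree ≤ n := by
      refine (natDegree_sub_le _ _).trans (max_le (by omega) ?_)
      refine (natDegree_C_mul_le _ _).trans ?_
      simp
    refine lt_of_le_of_ne hle fun heq => ?_
    have hc : (P - C (P.coeff n) * (X + C s) ^ n).coeff n = 0 := by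
      simp [coeff_X_add_C_pow]
    have : (P - C (P.coeff n) * (X + C s) ^ n) = 0 := by
      rw [← leadingCoeff_eq_zero, leadingCoeff, heq, hc]
    rw [this] at heq
    simp at heq; omega

lemma top_of_slice [CharZero K] (s : K) (hs : D s = 1)
    (H : ∀ f : K, ∃ P Q : Polynomial K, Q ≠ 0 ∧ (Q : PowerSeries K) *
        (PowerSeries.mk fun j => ((j.factorial : K)⁻¹) * ((⇑D)^[j] f)) = P)
    (M : IntermediateField k K) (hM : ker D ≤ M) (hsM : s ∈ M) : M = ⊤ := by
  refine eq_top_iff.mpr fun f _ => ?_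
  obtain ⟨P, Q, hQ, h0, hPQ, h1, h2⟩ := exists_hor D _ (GS_exp D f) (H f)
  have h3 := hor_mem D s hs M hM hsM _ P (Nat.lt_succ_self _) h1
  have h4 := hor_mem D s hs M hM hsM _ Q (Nat.lt_succ_self _) h2
  have := congrArg (PowerSeries.coeff 0) hPQ
  simp at this
  have hf : f = P.coeff 0 / Q.coeff 0 := by
    rw [← this]; field_simp
  rw [hf]; exact div_mem h3 h4

lemma transcendental_ker [CharZero K] (x : K) (hx : D x ≠ 0) : Transcendental (ker D) x := by
  intro hx'
  have hint : IsIntegral (ker D) x := hx'.isIntegral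
  have key : ∀ p : (ker D)[X], D (aeval x p) = aeval x (derivative p) * D x := by
    intro p
    induction p using Polynomial.induction_on' with
    | add p q hp hq => simp [hp, hq, add_mul]
    | monomial n a =>
      have ha : D (algebraMap (ker D) K a) = 0 := a.2
      simp only [aeval_monomial, D.leibniz, ha, derivative_monomial, D.leibniz_pow, smul_eq_mul,
        nsmul_eq_mul, mul_zero, add_zero, map_mul, map_natCast]
      ring
  have h := key (minpoly (ker D) x)
  rw [minpoly.aeval, map_zero, eq_comm, mul_eq_zero, or_iff_left hx] at h
  have hdeg := minpoly.natDegree_pos hint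
  have := minpoly.degree_le_of_ne_zero (ker D) x (p := derivative (minpoly (ker D) x)) (by
    intro h0
    have := derivative_eq_zero.mp h0
    omega) h
  have h2 := degree_derivative_lt (minpoly.ne_zero hint)
  exact absurd this (not_le.mpr h2)

/-- Lüroth, for an abstract simple transcendental extension. -/
lemma luroth {F E : Type*} [Field F] [Field E] [Algebra F E] (y : E) (hy : Transcendental F y)
    (htop : IntermediateField.adjoin F {y} = ⊤) (M : IntermediateField F E) :
    ∃ z, M = IntermediateField.adjoin F {z} := by
  let e : RatFunc F →ₐ[F] E :=
    (IntermediateField.val _).comp (RatFunc.algEquivOfTranscendental y hy).toAlgHom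
  have hsurj : Function.Surjective e := by
    intro a
    have ha : a ∈ IntermediateField.adjoin F {y} := htop ▸ IntermediateField.mem_top
    obtain ⟨b, hb⟩ := (RatFunc.algEquivOfTranscendental y hy).surjective ⟨a, ha⟩
    exact ⟨b, congrArg Subtype.val hb⟩
  have h := RatFunc.Luroth.eq_adjoin_generator (E := M.comap e)
  refine ⟨e (RatFunc.Luroth.generator (M.comap e)), ?_⟩
  have h2 := congrArg (IntermediateField.map e) h
  rw [IntermediateField.adjoin_map, Set.image_singleton] at h2
  rw [← h2]
  ext a
  obtain ⟨b, rfl⟩ := hsurj a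
  constructor
  · intro hb
    exact ⟨b, hb, rfl⟩
  · rintro ⟨c, hc, hcb⟩
    rw [← hcb]
    exact hc

/-- `m ∈ L(x)` is regular at `x = c` with value `v`. -/
def Ev (L : IntermediateField k K) (x : K) (c : k) (m : K) (v : L) : Prop :=
  ∃ A B : L[X], B.eval (algebraMap k L c) ≠ 0 ∧ m * aeval x B = aeval x A ∧
    v * B.eval (algebraMap k L c) = A.eval (algebraMap k L c)

lemma Ev.unique {L : IntermediateField k K} {x : K} (hx : Transcendental L x) {c : k} {m : K}
    {v w : L} (hv : Ev L x c m v) (hw : Ev L x c m w) : v = w := by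
  obtain ⟨A, B, h1, h2, h3⟩ := hv
  obtain ⟨A', B', h1', h2', h3'⟩ := hw
  have : A * B' = A' * B := by
    apply transcendental_iff_injective.mp hx
    rw [map_mul, map_mul, ← h2, ← h2']
    ring
  have := congrArg (eval (algebraMap k L c)) this
  rw [eval_mul, eval_mul, ← h3, ← h3'] at this
  apply mul_right_cancel₀ (mul_ne_zero h1 h1')
  linear_combination this

set_option maxHeartbeats 1000000 in
lemma descent [CharZero k] (L : IntermediateField k K) (x z : K) (hx : Transcendental L x)
    (hL : L ≤ IntermediateField.adjoin k {x, z})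
    (hz : z ∈ IntermediateField.adjoin L {x}) :
    ∃ x₀ ∈ L, L ≤ IntermediateField.adjoin k {x₀} := by
  have hinj := transcendental_iff_injective.mp hx
  obtain ⟨A, B, hz⟩ := (IntermediateField.mem_adjoin_simple_iff L z).mp hz
  wlog hB0 : B ≠ 0 generalizing A B
  · rw [not_not] at hB0
    exact this 0 1 (by simp [hz, hB0]) one_ne_zero
  have hBx : aeval x B ≠ 0 := fun h => hB0 (hinj (by simpa using h))
  have hroots : ∀ B : L[X], B ≠ 0 → ∀ᶠ c : k in Filter.cofinite,
      B.eval (algebraMap k L c) ≠ 0 := by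
    intro B hB
    have hfin : {a : L | B.eval a = 0}.Finite := by
      refine (B.rootSet_finite L).subset fun a ha => ?_
      rw [mem_rootSet]
      exact ⟨hB, by simpa using ha⟩
    have := hfin.preimage (f := algebraMap k L) (algebraMap k L).injective.injOn
    rw [Filter.eventually_cofinite]
    simpa using this
  let ζ : k → L := fun c => A.eval (algebraMap k L c) / B.eval (algebraMap k L c)
  have key : ∀ m ∈ IntermediateField.adjoin k {x, z}, ∀ᶠ c : k in Filter.cofinite,
      ∃ v : L, (v : K) ∈ IntermediateField.adjoin k {(ζ c : K)} ∧ Ev L x c m v := by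
    intro m hm
    induction hm using IntermediateField.adjoin_induction with
    | mem m hm =>
      rcases hm with rfl | rfl
      · refine .of_forall fun c => ⟨algebraMap k L c, ?_, X, 1, ?_, ?_, ?_⟩
        · exact IntermediateField.algebraMap_mem _ c
        all_goals simp
      · filter_upwards [hroots B hB0] with c hc
        refine ⟨ζ c, IntermediateField.mem_adjoin_simple_self _ _, A, B, hc, ?_, ?_⟩
        · rw [hz]; field_simp
        · simp only [ζ]; field_simp
    | algebraMap a =>
      refine .of_forall fun c => ⟨algebraMap k L a, ?_, C (algebraMap k L a), 1, ?_, ?_, ?_⟩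
      · exact IntermediateField.algebraMap_mem _ a
      · simp
      · simp
      · simp
    | add m n _ _ hm hn =>
      filter_upwards [hm, hn] with c ⟨v, hv, A, B, h1, h2, h3⟩ ⟨w, hw, A', B', h1', h2', h3'⟩
      refine ⟨v + w, add_mem hv hw, A * B' + A' * B, B * B', ?_, ?_, ?_⟩
      · rw [eval_mul]; exact mul_ne_zero h1 h1'
      · simp only [map_mul, map_add, ← h2, ← h2']; ring
      · simp only [eval_mul, eval_add, ← h3, ← h3']; ring
    | mul m n _ _ hm hn =>
      filter_upwards [hm, hn] with c ⟨v, hv, A, B, h1, h2, h3⟩ ⟨w, hw, A', B', h1', h2', h3'⟩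
      refine ⟨v * w, mul_mem hv hw, A * A', B * B', ?_, ?_, ?_⟩
      · rw [eval_mul]; exact mul_ne_zero h1 h1'
      · simp only [map_mul, ← h2, ← h2']; ring
      · simp only [eval_mul, ← h3, ← h3']; ring
    | inv m _ hm =>
      by_cases hm0 : m = 0
      · subst hm0; simpa using hm
      obtain ⟨c₀, -, -, A₀, B₀, h1₀, h2₀, -⟩ := hm.exists
      have hB₀ : B₀ ≠ 0 := by rintro rfl; simp at h1₀
      have hA₀ : A₀ ≠ 0 := by
        rintro rfl
        rw [map_zero, mul_eq_zero, or_iff_right hm0] at h2₀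
        exact hB₀ (hinj (by simpa using h2₀))
      filter_upwards [hm, hroots A₀ hA₀] with c ⟨v, hv, A, B, h1, h2, h3⟩ hc
      have hpoly : A * B₀ = A₀ * B := by
        apply hinj
        rw [map_mul, map_mul, ← h2, ← h2₀]
        ring
      have hA : A.eval (algebraMap k L c) ≠ 0 := by
        intro h
        have := congrArg (eval (algebraMap k L c)) hpoly
        rw [eval_mul, eval_mul, h, zero_mul] at this
        exact mul_ne_zero hc h1 this.symm
      have hv0 : v ≠ 0 := by
        rintro rfl
        rw [zero_mul] at h3; exact hA h3.symm
      refine ⟨v⁻¹, inv_mem hv, B, A, hA, ?_, ?_⟩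
      · rw [← h2]; field_simp
      · rw [← h3]; field_simp
  have key2 : ∀ l : L, ∀ᶠ c : k in Filter.cofinite,
      (l : K) ∈ IntermediateField.adjoin k {(ζ c : K)} := by
    intro l
    filter_upwards [key l (hL l.2)] with c ⟨v, hv, hE⟩
    have : v = l := hE.unique hx ⟨C l, 1, by simp, by simp, by simp⟩
    rwa [← this]
  have key3 : ∀ P : L[X], ∀ᶠ c : k in Filter.cofinite,
      ∀ i, (P.coeff i : K) ∈ IntermediateField.adjoin k {(ζ c : K)} := by
    intro P
    have := (Filter.eventually_all_finset P.support).mpr fun i _ => key2 (P.coeff i)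
    filter_upwards [this] with c hc i
    by_cases hi : P.coeff i = 0
    · rw [hi]; exact zero_mem _
    · exact hc i (mem_support_iff.mpr hi)
  obtain ⟨c, hcA, hcB⟩ := ((key3 A).and (key3 B)).exists
  refine ⟨ζ c, (ζ c).2, ?_⟩
  set L₀ := IntermediateField.adjoin k {(ζ c : K)} with hL₀
  have hL₀L : L₀ ≤ L := by
    rw [hL₀, IntermediateField.adjoin_simple_le_iff]; exact (ζ c).2
  -- the field `L₀(x)` contains `x` and `z`
  have hpol : ∀ P : L[X], (∀ i, (P.coeff i : K) ∈ L₀) →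
      aeval x P ∈ IntermediateField.adjoin L₀ {x} := by
    intro P hP
    rw [aeval_eq_sum_range]
    refine sum_mem fun i _ => ?_
    rw [Algebra.smul_def]
    refine mul_mem ?_ (pow_mem (IntermediateField.mem_adjoin_simple_self _ _) _)
    exact IntermediateField.algebraMap_mem (IntermediateField.adjoin L₀ {x}) ⟨_, hP i⟩
  have hle : IntermediateField.adjoin k {x, z} ≤
      (IntermediateField.adjoin L₀ {x}).restrictScalars k := by
    rw [IntermediateField.adjoin_le_iff]
    rintro m (h | h)
    · rw [h]
      exact (IntermediateField.mem_restrictScalars k).mpr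
        (IntermediateField.mem_adjoin_simple_self L₀ x)
    · rw [Set.mem_singleton_iff.mp h, hz]
      refine (IntermediateField.mem_restrictScalars k).mpr ?_
      exact div_mem (hpol A hcA) (hpol B hcB)
  intro l hl
  obtain ⟨U, V, hUV⟩ := (IntermediateField.mem_adjoin_simple_iff L₀ l).mp (hle (hL hl))
  by_cases hV : V = 0
  · rw [hUV, hV]; simp
  let ι : L₀ →+* L := (IntermediateField.inclusion hL₀L).toRingHom
  have hι : ∀ W : L₀[X], aeval x (W.map ι) = aeval x W := by
    intro W
    simp only [aeval_def, eval₂_map]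
    rfl
  have hV' : V.map ι ≠ 0 := (Polynomial.map_ne_zero_iff ι.injective).mpr hV
  have hVx : aeval x V ≠ 0 := by
    rw [← hι]
    exact fun h => hV' (hinj (by simpa using h))
  have heq : C (⟨l, hl⟩ : L) * V.map ι = U.map ι := by
    apply hinj
    rw [map_mul, hι, hι, aeval_C]
    change l * _ = _
    rw [hUV]; field_simp
  have hc := congrArg (fun p : L[X] => ((p.coeff V.natDegree : L) : K)) heq
  simp only [coeff_C_mul, coeff_map] at hc
  change l * (V.coeff V.natDegree : K) = (U.coeff V.natDegree : K) at hc
  have hlead : (V.coeff V.natDegree : K) ≠ 0 := by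
    have : V.coeff V.natDegree ≠ 0 := leadingCoeff_ne_zero.mpr hV
    exact_mod_cast this
  rw [eq_div_of_mul_eq hlead hc]
  exact div_mem (U.coeff _).2 (V.coeff _).2

set_option maxHeartbeats 1000000 in
lemma main_aux [CharZero k] (x y : K) (hind : AlgebraicIndependent k ![x, y])
    (hgen : IntermediateField.adjoin k {x, y} = ⊤)
    (L : IntermediateField k K) (hx : Transcendental L x) :
    ∃ x₀ ∈ L, L ≤ IntermediateField.adjoin k {x₀} := by
  have hy : Transcendental (IntermediateField.adjoin k {x}) y := by
    rw [IntermediateField.transcendental_adjoin_iff]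
    have := hind.transcendental_adjoin (s := {0}) (i := 1) (by simp)
    rw [Set.image_singleton] at this
    exact this
  have htop : IntermediateField.adjoin (IntermediateField.adjoin k {x}) {y} = ⊤ := by
    apply IntermediateField.restrictScalars_injective k
    rw [IntermediateField.adjoin_adjoin_left, IntermediateField.restrictScalars_top, ← hgen]
    rfl
  obtain ⟨z, hz⟩ := luroth y hy htop
    (IntermediateField.adjoin (IntermediateField.adjoin k {x}) (L : Set K))
  have h1 := congrArg (IntermediateField.restrictScalars k) hz
  rw [IntermediateField.adjoin_adjoin_left, IntermediateField.adjoin_adjoin_left] at h1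
  apply descent L x z hx
  · intro l hl
    have : l ∈ IntermediateField.adjoin k ({x} ∪ (L : Set K)) :=
      IntermediateField.subset_adjoin _ _ (Or.inr hl)
    rw [h1] at this
    exact this
  · have : z ∈ IntermediateField.adjoin k ({x} ∪ (L : Set K)) := by
      rw [h1]
      exact IntermediateField.subset_adjoin _ _ (Or.inr rfl)
    have hle : IntermediateField.adjoin k ({x} ∪ (L : Set K)) ≤
        (IntermediateField.adjoin L {x}).restrictScalars k := by
      rw [IntermediateField.adjoin_le_iff]
      rintro m (h | hm)
      · rw [Set.mem_singleton_iff.mp h]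
        exact (IntermediateField.mem_restrictScalars k).mpr
          (IntermediateField.mem_adjoin_simple_self L x)
      · refine (IntermediateField.mem_restrictScalars k).mpr ?_
        exact IntermediateField.algebraMap_mem (IntermediateField.adjoin L {x}) ⟨m, hm⟩
    exact hle this

end RR

/-- let K = k(x,y) be a rational function field in two variables over
a field k of characteristic zero (an extension generated by two algebraically
independent elements x, y).  Every nonzero rationally integrable k-derivation ∂ of K
becomes, after a birational change of coordinates, the derivation r(x₀)·∂/∂y₀:
there exist x₀, y₀ ∈ K with K = k(x₀, y₀), ∂(x₀) = 0 and ∂(y₀) = 1. -/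
theorem rentschler_rational (k : Type*) [Field k] [CharZero k]
    (K : Type*) [Field K] [Algebra k K]
    (x y : K) (hind : AlgebraicIndependent k ![x, y])
    (hgen : IntermediateField.adjoin k {x, y} = ⊤)
    (D : Derivation k K K) (hD0 : D ≠ 0)
    (hratint : ∀ f : K, ∃ P Q : Polynomial K, Q ≠ 0 ∧
      (Q : PowerSeries K) *
        (PowerSeries.mk fun j => ((j.factorial : K)⁻¹) * ((⇑D)^[j] f)) = P) :
    ∃ x₀ y₀ : K, IntermediateField.adjoin k {x₀, y₀} = ⊤ ∧
      D x₀ = 0 ∧ D y₀ = 1 := by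
  have : CharZero K := charZero_of_injective_algebraMap (algebraMap k K).injective
  obtain ⟨s, hs⟩ := RR.exists_slice D hD0 hratint
  suffices h : ∃ x₀ ∈ RR.ker D, RR.ker D ≤ IntermediateField.adjoin k {x₀} by
    obtain ⟨x₀, hx₀, hle⟩ := h
    refine ⟨x₀, s, ?_, hx₀, hs⟩
    refine RR.top_of_slice D s hs hratint _ (hle.trans ?_) ?_
    · exact IntermediateField.adjoin.mono _ _ _ (by simp)
    · exact IntermediateField.subset_adjoin _ _ (by simp)
  by_cases hx : D x = 0
  · have hy : D y ≠ 0 := by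
      intro hy
      have hle : IntermediateField.adjoin k {x, y} ≤ RR.ker D := by
        rw [IntermediateField.adjoin_le_iff]
        rintro m (rfl | rfl)
        · exact hx
        · exact hy
      rw [hgen] at hle
      exact hD0 (Derivation.ext fun a => hle IntermediateField.mem_top)
    refine RR.main_aux y x ?_ (by rw [Set.pair_comm, hgen]) _ (RR.transcendental_ker D y hy)
    have := (algebraicIndependent_equiv (Equiv.swap (0 : Fin 2) 1)).mpr hind
    convert this using 1
    ext i
    fin_cases i <;> simp
  · exact RR.main_aux x y hind hgen _ (RR.transcendental_ker D x hx)
end
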